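/- For the weight a = (3,5,9) (the weight of the Z₁₃-singularity), there exist 3×3 matrices C and D with non-negative integer entries such that |det D| = 1, B_a = C·D, (3,5,9) = (1,1,1)·D, f_C(x,y,z) = x³ + y²z + xz³ after a permutation of the variables (x,y,z) (the normal form of the strange dual singularity Q₁₁), and f_C has an isolated critical point at the origin of ℂ³ (all partial derivatives of f_C vanish at 0, and there is a punctured neighborhood of 0 containing no critical point of f_C). -/

import Mathlib

open Matrix BigOperators

noncomputable section

/-- `f_C(x,y,z) = Σ_{i=1}^{3} x^{c_{i1}} y^{c_{i2}} z^{c_{i3}}` for a 3×3 matrix `C`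
with non-negative integer entries. -/
def fC (C : Matrix (Fin 3) (Fin 3) ℕ) : (Fin 3 → ℂ) → ℂ :=
  fun v => ∑ i : Fin 3, ∏ j : Fin 3, v j ^ C i j

/-- `φ_D(u₁,u₂,u₃) = (u₁^{d_{i1}} u₂^{d_{i2}} u₃^{d_{i3}})_{i=1}^{3}`. -/
def phiD (D : Matrix (Fin 3) (Fin 3) ℕ) : (Fin 3 → ℂ) → (Fin 3 → ℂ) :=
  fun u i => ∏ j : Fin 3, u j ^ D i j

/-- The matrix `B_a` with rows `(a₁+1,a₂,a₃)`, `(a₁,a₂+1,a₃)`, `(a₁,a₂,a₃+1)`. -/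
def Bmat (a : Fin 3 → ℕ) : Matrix (Fin 3) (Fin 3) ℕ :=
  fun i j => a j + if i = j then 1 else 0

/-- `G_a(u₁,u₂,u₃) = u₁^{a₁+1}u₂^{a₂}u₃^{a₃} + u₁^{a₁}u₂^{a₂+1}u₃^{a₃} + u₁^{a₁}u₂^{a₂}u₃^{a₃+1}`. -/
def Ga (a : Fin 3 → ℕ) : (Fin 3 → ℂ) → ℂ :=
  fun u => u 0 ^ (a 0 + 1) * u 1 ^ a 1 * u 2 ^ a 2
         + u 0 ^ a 0 * u 1 ^ (a 1 + 1) * u 2 ^ a 2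
         + u 0 ^ a 0 * u 1 ^ a 1 * u 2 ^ (a 2 + 1)

/-- `H_a(u₁,u₂,u₃) = u₁^{a₁}u₂^{a₂}u₃^{a₃}`. -/
def Ha (a : Fin 3 → ℕ) : (Fin 3 → ℂ) → ℂ :=
  fun u => u 0 ^ a 0 * u 1 ^ a 1 * u 2 ^ a 2

/-- Determinant of a matrix of natural numbers, computed over `ℤ`. -/
def detZ (M : Matrix (Fin 3) (Fin 3) ℕ) : ℤ :=
  (M.map (fun n : ℕ => (n : ℤ))).det

/-- `f` has an isolated critical point at the origin of `ℂ³`: the derivative of `f`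
vanishes at `0`, and there is a punctured neighborhood of `0` containing no critical
point of `f`. -/
def IsolatedCriticalAtZero (f : (Fin 3 → ℂ) → ℂ) : Prop :=
  fderiv ℂ f 0 = 0 ∧
  ∃ ε : ℝ, ε > 0 ∧ ∀ p : Fin 3 → ℂ, p ≠ 0 → ‖p‖ < ε → fderiv ℂ f p ≠ 0

/-!
If `(1,1,1) D = a`, then `B_a = I + J D` with `J` the all-ones matrix, so `B_a = C D` says exactly
that `(C - J) D = I`. Hence `D` is the inverse of `C - J`, which is automatically unimodular, and
`C` can be read off from the normal form of `Q₁₁`. That normal form is a chain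
`x ^ a + x z ^ b + z y ^ c`. At a critical point `∂/∂y` gives `y = 0` or `z = 0`; in the first case
`∂/∂z` gives `x = 0` or `z = 0`; and `∂/∂x` makes `x` and `z` vanish together, after which `∂/∂z`
kills `y`.
-/

theorem sub_ones_mul_eq_one_of_Bmat_eq_mul {a : Fin 3 → ℕ} {C D : Matrix (Fin 3) (Fin 3) ℕ}
    (hB : Bmat a = C * D) (ha : ∀ j, ∑ i, D i j = a j) :
    (C.map (fun n : ℕ => (n : ℤ)) - of fun _ _ => 1) * D.map (fun n : ℕ => (n : ℤ)) = 1 := by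
  ext i j
  have hCD : ∑ k, (C i k : ℤ) * D k j = a j + if i = j then 1 else 0 := by
    exact_mod_cast (congrFun₂ hB i j).symm
  have hD : ∑ k, (D k j : ℤ) = a j := by exact_mod_cast ha j
  simp [mul_apply, sub_mul, hCD, hD, one_apply]

theorem abs_detZ_eq_one_of_Bmat_eq_mul {a : Fin 3 → ℕ} {C D : Matrix (Fin 3) (Fin 3) ℕ}
    (hB : Bmat a = C * D) (ha : ∀ j, ∑ i, D i j = a j) : |detZ D| = 1 :=
  Int.isUnit_iff_abs_eq.mp <|
    (isUnit_iff_isUnit_det _).mp <|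
      IsUnit.of_mul_eq_one_right _ (sub_ones_mul_eq_one_of_Bmat_eq_mul hB ha)

theorem hasFDerivAt_fC (C : Matrix (Fin 3) (Fin 3) ℕ) (p : Fin 3 → ℂ) :
    HasFDerivAt (fC C)
      (∑ i, ∑ j, (∏ k ∈ Finset.univ.erase j, p k ^ C i k) •
        (C i j * p j ^ (C i j - 1)) • ContinuousLinearMap.proj (R := ℂ) (φ := fun _ => ℂ) j) p :=
  HasFDerivAt.fun_sum fun i _ => HasFDerivAt.finsetProd fun j _ => by
    simpa using (hasFDerivAt_apply (𝕜 := ℂ) j p).pow (C i j)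

theorem fderiv_fC_single (C : Matrix (Fin 3) (Fin 3) ℕ) (p : Fin 3 → ℂ) (j : Fin 3) :
    fderiv ℂ (fC C) p (Pi.single j 1) =
      ∑ i, (∏ k ∈ Finset.univ.erase j, p k ^ C i k) * (C i j * p j ^ (C i j - 1)) := by
  simp [(hasFDerivAt_fC C p).fderiv, Pi.single_apply]

theorem fderiv_fC_eq_zero_iff (C : Matrix (Fin 3) (Fin 3) ℕ) (p : Fin 3 → ℂ) :
    fderiv ℂ (fC C) p = 0 ↔
      ∀ j, ∑ i, (∏ k ∈ Finset.univ.erase j, p k ^ C i k) * (C i j * p j ^ (C i j - 1)) = 0 := by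
  simp_rw [← fderiv_fC_single]
  refine ⟨fun h j => by simp [h], fun h => ?_⟩
  exact ContinuousLinearMap.coe_injective <| LinearMap.pi_ext' fun j => LinearMap.ext_ring (h j)

/-- The exponent matrix of the chain polynomial `x ^ a + x * z ^ b + z * y ^ c`. The rows are those
of `x * z ^ b`, `x ^ a` and `z * y ^ c`, in this order, to match the rows of `Bmat`. -/
def chainMatrix (a b c : ℕ) : Matrix (Fin 3) (Fin 3) ℕ :=
  !![1, 0, b; a, 0, 0; 0, c, 1]

theorem fC_chainMatrix (a b c : ℕ) (v : Fin 3 → ℂ) :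
    fC (chainMatrix a b c) v = v 0 * v 2 ^ b + v 0 ^ a + v 1 ^ c * v 2 := by
  simp [fC, chainMatrix, Fin.sum_univ_three, Fin.prod_univ_three]

theorem fderiv_fC_chainMatrix_eq_zero_iff (a b c : ℕ) (p : Fin 3 → ℂ) :
    fderiv ℂ (fC (chainMatrix a b c)) p = 0 ↔
      a * p 0 ^ (a - 1) + p 2 ^ b = 0 ∧
      c * p 1 ^ (c - 1) * p 2 = 0 ∧
      b * p 0 * p 2 ^ (b - 1) + p 1 ^ c = 0 := by
  have erase_zero : (Finset.univ.erase 0 : Finset (Fin 3)) = {1, 2} := rfl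
  have erase_one : (Finset.univ.erase 1 : Finset (Fin 3)) = {0, 2} := rfl
  have erase_two : (Finset.univ.erase 2 : Finset (Fin 3)) = {0, 1} := rfl
  rw [fderiv_fC_eq_zero_iff, Fin.forall_fin_succ, Fin.forall_fin_two]
  congr! 3 <;>
    simp [Fin.sum_univ_three, chainMatrix, erase_zero, erase_one, erase_two] <;>
    ring

theorem chain_critical_equations_iff {R : Type*} [Semiring R] [NoZeroDivisors R] [CharZero R]
    {a b c : ℕ} (ha : 2 ≤ a) (hb : b ≠ 0) (hc : c ≠ 0) {x y z : R} :
    (a * x ^ (a - 1) + z ^ b = 0 ∧ c * y ^ (c - 1) * z = 0 ∧ b * x * z ^ (b - 1) + y ^ c = 0) ↔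
      x = 0 ∧ y = 0 ∧ z = 0 := by
  have ha₀ : a ≠ 0 := by lia
  have ha₁ : a - 1 ≠ 0 := by lia
  constructor
  · rintro ⟨dx, dy, dz⟩
    have x_zero_of_z_zero (hz : z = 0) : x = 0 := by simpa [hz, ha₀, ha₁, hb] using dx
    have z_zero_of_x_zero (hx : x = 0) : z = 0 := by simpa [hx, ha₁, hb] using dx
    have hz : z = 0 := by
      rcases mul_eq_zero.mp dy with hy | hz
      · obtain ⟨rfl, -⟩ : y = 0 ∧ c - 1 ≠ 0 := by simpa [hc] using hy
        obtain hx | ⟨hz, -⟩ : x = 0 ∨ z = 0 ∧ b - 1 ≠ 0 := by simpa [hb, hc] using dz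
        · exact z_zero_of_x_zero hx
        · exact hz
      · exact hz
    have hx : x = 0 := x_zero_of_z_zero hz
    exact ⟨hx, by simpa [hx, hc] using dz, hz⟩
  · rintro ⟨rfl, rfl, rfl⟩
    simp [ha₁, hb, hc]

theorem isolatedCriticalAtZero_fC_chainMatrix {a b c : ℕ} (ha : 2 ≤ a) (hb : b ≠ 0) (hc : c ≠ 0) :
    IsolatedCriticalAtZero (fC (chainMatrix a b c)) := by
  have critical_iff (p : Fin 3 → ℂ) : fderiv ℂ (fC (chainMatrix a b c)) p = 0 ↔ p = 0 := by
    rw [fderiv_fC_chainMatrix_eq_zero_iff, chain_critical_equations_iff ha hb hc]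
    simp [funext_iff, Fin.forall_fin_succ]
  exact ⟨(critical_iff 0).mpr rfl, 1, one_pos, fun p hp _ => (critical_iff p).not.mpr hp⟩

theorem stmt_11 :
    ∃ C D : Matrix (Fin 3) (Fin 3) ℕ,
      |detZ D| = 1 ∧
      Bmat ![3, 5, 9] = C * D ∧
      (∀ j, (∑ i : Fin 3, D i j) = ![3, 5, 9] j) ∧
      (∃ σ : Equiv.Perm (Fin 3),
        ∀ x y z : ℂ, fC C (fun i => ![x, y, z] (σ i)) = x ^ 3 + y ^ 2 * z + x * z ^ 3) ∧
      IsolatedCriticalAtZero (fC C) := by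
  have hB : Bmat ![3, 5, 9] = chainMatrix 3 3 2 * !![1, 2, 3; 1, 2, 4; 1, 1, 2] := by decide
  have ha : ∀ j, ∑ i, !![1, 2, 3; 1, 2, 4; 1, 1, 2] i j = ![3, 5, 9] j := by decide
  refine ⟨_, _, abs_detZ_eq_one_of_Bmat_eq_mul hB ha, hB, ha, ⟨1, fun x y z => ?_⟩,
    isolatedCriticalAtZero_fC_chainMatrix (by decide) (by decide) (by decide)⟩
  simp only [fC_chainMatrix, Equiv.Perm.one_apply, cons_val]
  ring
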